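/- Let Γ^i_μ : ℝ^m × ℝ^n → ℝ (for 1 ≤ μ ≤ m, 1 ≤ i ≤ n) be smooth functions whose curvature vanishes identically: R^j_{μν} := ∂Γ^j_ν/∂x^μ − ∂Γ^j_μ/∂x^ν + Σᵢ (Γ^i_μ ∂Γ^j_ν/∂y^i − Γ^i_ν ∂Γ^j_μ/∂y^i) = 0 everywhere on ℝ^m × ℝ^n, for all μ, ν, j. Then for every point (x₀, y₀) ∈ ℝ^m × ℝ^n there exist an open neighbourhood U of x₀ in ℝ^m and a smooth map f : U → ℝ^n with f(x₀) = y₀ satisfying the first-order system of partial differential equations ∂f^i/∂x^μ(x) = Γ^i_μ(x, f(x)) for all x ∈ U and all i, μ. -/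

import Mathlib

/-!
Restricted to a ray `t ↦ x₀ + t • h`, the equation `D f = F (x, f x)` is an ordinary differential
equation; let `c h` be its solution with value `y₀` at `t = 0`, and put `f (x₀ + h) = c h 1`. If the
curvature vanishes, then `t ↦ c h t + t • F (x₀ + t • h, c h t) k` solves the ray equation in
direction `h + k` up to an error `o(‖k‖)`, uniformly in `t`. Grönwall's inequality compares it with
`c (h + k)` at `t = 1`: `f (x₀ + h + k) = f (x₀ + h) + F (x₀ + h, f (x₀ + h)) k + o(‖k‖)`.
-/

open Set Metric Filter Topology
open scoped NNReal

section Preliminaries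

section Segment

variable {E G : Type*} [NormedAddCommGroup E] [NormedSpace ℝ E] [PseudoMetricSpace G]
  {x₀ h : E} {a t : ℝ}

theorem add_smul_mem_closedBall (hh : ‖h‖ ≤ a) (ht : t ∈ Icc (0 : ℝ) 1) :
    x₀ + t • h ∈ closedBall x₀ a := by
  rw [mem_closedBall_iff_norm, add_sub_cancel_left, norm_smul, Real.norm_of_nonneg ht.1]
  exact (mul_le_of_le_one_left (norm_nonneg h) ht.2).trans hh

theorem mk_add_smul_mem_closedBall (hh : ‖h‖ ≤ a) (ht : t ∈ Icc (0 : ℝ) 1) {y₀ y : G}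
    (hy : y ∈ closedBall y₀ a) : (x₀ + t • h, y) ∈ closedBall (x₀, y₀) a := by
  rw [← closedBall_prod_same]
  exact ⟨add_smul_mem_closedBall hh ht, hy⟩

end Segment

theorem clm_apply_mk_eq_add_sum {E H κ : Type*} [NormedAddCommGroup E]
    [NormedSpace ℝ E] [NormedAddCommGroup H] [NormedSpace ℝ H] [Fintype κ] [DecidableEq κ]
    (L : E × (κ → ℝ) →L[ℝ] H) (u : E) (z : κ → ℝ) :
    L (u, z) = L (u, 0) + ∑ i, z i • L (0, Pi.single i 1) := by
  calc L (u, z) = L (u, 0) + (L ∘L .inr ℝ E (κ → ℝ)).toLinearMap z := by simp [← map_add]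
    _ = L (u, 0) + ∑ i, z i • L (0, Pi.single i 1) := by
      nth_rw 1 [← (Pi.basisFun ℝ κ).sum_repr z]
      simp

variable {E G : Type*} [NormedAddCommGroup E] [NormedSpace ℝ E]
  [NormedAddCommGroup G] [NormedSpace ℝ G]

-- Mathlib's `IsPicardLindelof.exists_eq_forall_mem_Icc_hasDerivWithinAt` forgets that the solution
-- stays in the ball.
theorem exists_forall_mem_closedBall_hasDerivWithinAt_of_isPicardLindelof [CompleteSpace G]
    {v : ℝ → G → G} {tmin tmax : ℝ} {t₀ : Icc tmin tmax} {y₀ y : G} {a r L K : ℝ≥0}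
    (hv : IsPicardLindelof v t₀ y₀ a r L K) (hy : y ∈ closedBall y₀ r) :
    ∃ c : ℝ → G, c t₀ = y ∧ (∀ t, c t ∈ closedBall y₀ a) ∧
      ∀ t ∈ Icc tmin tmax, HasDerivWithinAt c (v t (c t)) (Icc tmin tmax) t := by
  obtain ⟨c, hc⟩ := ODE.FunSpace.exists_isFixedPt_next hv hy
  have mem_ball (t : ℝ) : c.compProj t ∈ closedBall y₀ a := c.compProj_mem_closedBall hv.mul_max_le
  refine ⟨c.compProj, ?_, mem_ball, fun t ht ↦ ?_⟩
  · rw [ODE.FunSpace.compProj_val, ← hc, ODE.FunSpace.next_apply₀]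
  · refine (ODE.hasDerivWithinAt_picard_Icc t₀.2 hv.continuousOn_uncurry
      c.continuous_compProj.continuousOn (fun s _ ↦ mem_ball s) y ht).congr_of_mem
        (fun s hs ↦ ?_) ht
    nth_rw 1 [← hc]
    rw [ODE.FunSpace.compProj_of_mem hs, ODE.FunSpace.next_apply]

theorem gronwallBound_zero_eq_mul (K ε x : ℝ) :
    gronwallBound 0 K ε x = gronwallBound 0 K 1 x * ε := by
  unfold gronwallBound
  split_ifs <;> ring

theorem eventually_forall_mem_norm_sub_sub_fderiv_le {f : E → G} {Ω K : Set E}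
    (hΩ : IsOpen Ω) (hf : ContDiffOn ℝ 1 f Ω) (hK : IsCompact K) (hKΩ : K ⊆ Ω)
    {ε : ℝ} (hε : 0 < ε) :
    ∀ᶠ v in 𝓝 0, ∀ p ∈ K, ‖f (p + v) - f p - fderiv ℝ f p v‖ ≤ ε * ‖v‖ := by
  have fderiv_cont : ∀ p ∈ K, ContinuousAt (fderiv ℝ f) p := fun p hp ↦
    (hf.continuousOn_fderiv_of_isOpen hΩ le_rfl).continuousAt (hΩ.mem_nhds (hKΩ hp))
  obtain ⟨δ₁, hδ₁, fderiv_close⟩ := Metric.mem_uniformity_dist.1 <|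
    hK.uniformContinuousAt_of_continuousAt _ fderiv_cont (Metric.dist_mem_uniformity hε)
  obtain ⟨δ₂, hδ₂, thickening_subset⟩ := hK.exists_thickening_subset_open hΩ hKΩ
  filter_upwards [ball_mem_nhds 0 (lt_min hδ₁ hδ₂)] with v hv p hp
  rw [mem_ball_zero_iff, lt_min_iff] at hv
  have segment_bound : ∀ q ∈ ball p (min δ₁ δ₂), ‖fderiv ℝ f q - fderiv ℝ f p‖ ≤ ε := by
    intro q hq
    rw [← dist_eq_norm, dist_comm]
    exact (fderiv_close ((mem_ball'.1 hq).trans_le (min_le_left _ _)) hp).le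
  have differentiable : ∀ q ∈ ball p (min δ₁ δ₂), DifferentiableAt ℝ f q := fun q hq ↦
    (hf.differentiableOn one_ne_zero).differentiableAt <| hΩ.mem_nhds <| thickening_subset <|
      ball_subset_thickening hp _ (ball_subset_ball (min_le_right _ _) hq)
  simpa using (convex_ball p (min δ₁ δ₂)).norm_image_sub_le_of_norm_fderiv_le' differentiable
    segment_bound (mem_ball_self (lt_min hδ₁ hδ₂)) (by simpa using hv : p + v ∈ _)

theorem exists_closedBall_subset_lipschitzOnWith_norm_le {f : E → G} {Ω : Set E} {p : E}
    (hΩ : IsOpen Ω) (hf : ContDiffOn ℝ 1 f Ω) (hp : p ∈ Ω) :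
    ∃ a > 0, ∃ M : ℝ≥0, closedBall p a ⊆ Ω ∧ LipschitzOnWith M f (closedBall p a) ∧
      ∀ q ∈ closedBall p a, ‖f q‖ ≤ M := by
  have hfp : ContDiffAt ℝ 1 f p := hf.contDiffAt (hΩ.mem_nhds hp)
  obtain ⟨L, s, hs, hL⟩ := hfp.exists_lipschitzOnWith
  have norm_lt : ∀ᶠ q in 𝓝 p, ‖f q‖ < ‖f p‖ + 1 :=
    hfp.continuousAt.norm.eventually_lt_const (lt_add_one _)
  obtain ⟨a, ha, ball_subset⟩ := nhds_basis_closedBall.mem_iff.1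
    (inter_mem (inter_mem (hΩ.mem_nhds hp) hs) norm_lt)
  refine ⟨a, ha, max L (‖f p‖₊ + 1), fun q hq ↦ (ball_subset hq).1.1,
    (hL.mono fun q hq ↦ (ball_subset hq).1.2).weaken (le_max_left _ _), fun q hq ↦ ?_⟩
  exact (ball_subset hq).2.le.trans (by simp)

end Preliminaries

/-- A jet field (connection) on the trivial bundle `E × G → E`: `F (x, y)` is the prescribed
derivative at `x` of a section through `(x, y)`. -/
abbrev JetField (E G : Type*) [NormedAddCommGroup E] [NormedSpace ℝ E]
    [NormedAddCommGroup G] [NormedSpace ℝ G] :=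
  E × G → E →L[ℝ] G

namespace JetField

section Frobenius

variable {E G : Type*} [NormedAddCommGroup E] [NormedSpace ℝ E]
  [NormedAddCommGroup G] [NormedSpace ℝ G]

/-- The horizontal lift `u ↦ (u, F p u)` of vectors on the base to the total space at `p`. -/
def horizontalLift (F : JetField E G) (p : E × G) : E →L[ℝ] E × G :=
  (ContinuousLinearMap.id ℝ E).prod (F p)

/-- The curvature of a jet field, as a bilinear map on the base: the antisymmetrization of
`(u, v) ↦ D_{(u, F p u)} F v`. In coordinates it is `R^j_{μν}`, see
`JetField.curvature_ofCoeffs_single`. -/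
noncomputable def curvature (F : JetField E G) (p : E × G) : E →L[ℝ] E →L[ℝ] G :=
  fderiv ℝ F p ∘L F.horizontalLift p - (fderiv ℝ F p ∘L F.horizontalLift p).flip

/-- The section `x ↦ (x, f x)` is integral for the jet field over `U`. -/
def IsIntegralSectionOn (F : JetField E G) (f : E → G) (U : Set E) : Prop :=
  ∀ x ∈ U, HasFDerivAt f (F (x, f x)) x

/-- The restriction of the integral section equation to the segment from `x₀` to `x₀ + h`,
parametrized by `[0, 1]`: an ordinary differential equation for the curve `c`. -/
def IsRadialSolution (F : JetField E G) (x₀ h : E) (c : ℝ → G) : Prop :=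
  ∀ t ∈ Icc (0 : ℝ) 1, HasDerivWithinAt c (F (x₀ + t • h, c t) h) (Icc 0 1) t

/-- The first-order guess, built from the radial solution `c` along `h`, for the radial solution
along `h + k`. -/
def radialVariation (F : JetField E G) (x₀ h k : E) (c : ℝ → G) (t : ℝ) : G :=
  c t + t • F (x₀ + t • h, c t) k

/-- The error at `p = (x₀ + t • h, c t)` with which the radial variation solves the radial equation
along `h + k`: its derivative minus the right-hand side of that equation. -/
noncomputable def radialDefect (F : JetField E G) (p : E × G) (t : ℝ) (h k : E) : G :=
  F p h + (F p k + t • fderiv ℝ F p (F.horizontalLift p h) k)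
    - F (p + t • F.horizontalLift p k) (h + k)

variable {F : JetField E G} {Ω : Set (E × G)} {x₀ h k : E} {y₀ : G} {c d : ℝ → G}

@[simp]
theorem horizontalLift_apply (p : E × G) (u : E) : F.horizontalLift p u = (u, F p u) := rfl

theorem fderiv_horizontalLift_comm_of_curvature_eq_zero {p : E × G} (hflat : F.curvature p = 0)
    (u v : E) :
    fderiv ℝ F p (F.horizontalLift p u) v = fderiv ℝ F p (F.horizontalLift p v) u := by
  simpa [curvature, sub_eq_zero] using DFunLike.congr_fun (DFunLike.congr_fun hflat u) v

theorem lipschitzOnWith_radial {a : ℝ} {M : ℝ≥0}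
    (hlip : LipschitzOnWith M F (closedBall (x₀, y₀) a)) {x : E} (hx : x ∈ closedBall x₀ a)
    (h : E) : LipschitzOnWith (M * ‖h‖₊) (fun y ↦ F (x, y) h) (closedBall y₀ a) := by
  refine LipschitzOnWith.of_dist_le_mul fun y hy z hz ↦ ?_
  rw [← closedBall_prod_same] at hlip
  calc dist (F (x, y) h) (F (x, z) h) = ‖(F (x, y) - F (x, z)) h‖ := by
        rw [dist_eq_norm, _root_.sub_apply]
    _ ≤ dist (F (x, y)) (F (x, z)) * ‖h‖ := by
        rw [dist_eq_norm]; exact ContinuousLinearMap.le_opNorm _ _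
    _ ≤ (M * dist (x, y) (x, z)) * ‖h‖ := by
        gcongr; exact hlip.dist_le_mul _ ⟨hx, hy⟩ _ ⟨hx, hz⟩
    _ = ↑(M * ‖h‖₊) * dist y z := by
        rw [dist_prod_same_left, NNReal.coe_mul, coe_nnnorm]; ring

theorem exists_isRadialSolution [CompleteSpace G] {a : ℝ} {M : ℝ≥0}
    (hlip : LipschitzOnWith M F (closedBall (x₀, y₀) a))
    (hbound : ∀ p ∈ closedBall (x₀, y₀) a, ‖F p‖ ≤ M) (hh : ‖h‖ ≤ a) (hMh : M * ‖h‖ ≤ a) :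
    ∃ c : ℝ → G, c 0 = y₀ ∧ (∀ t, c t ∈ closedBall y₀ (M * ‖h‖)) ∧
      F.IsRadialSolution x₀ h c := by
  have ball_subset : closedBall y₀ (M * ‖h‖) ⊆ closedBall y₀ a := closedBall_subset_closedBall hMh
  have picard : IsPicardLindelof (fun t y ↦ F (x₀ + t • h, y) h) (tmin := 0) (tmax := 1)
      ⟨0, left_mem_Icc.2 zero_le_one⟩ y₀ (M * ‖h‖₊) 0 (M * ‖h‖₊) (M * ‖h‖₊) :=
    { lipschitzOnWith := fun t ht ↦
        (lipschitzOnWith_radial hlip (add_smul_mem_closedBall hh ht) h).mono ball_subset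
      continuousOn := fun y hy ↦ (hlip.continuousOn.comp (f := fun t : ℝ ↦ (x₀ + t • h, y))
        (by fun_prop) fun t ht ↦ mk_add_smul_mem_closedBall hh ht (ball_subset hy)).clm_apply
          continuousOn_const
      norm_le := fun t ht y hy ↦ (F _).le_of_opNorm_le
        (hbound _ (mk_add_smul_mem_closedBall hh ht (ball_subset hy))) h
      mul_max_le := by simp }
  exact exists_forall_mem_closedBall_hasDerivWithinAt_of_isPicardLindelof picard
    (mem_closedBall_self le_rfl)

theorem IsRadialSolution.continuousOn (hc : F.IsRadialSolution x₀ h c) :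
    ContinuousOn c (Icc 0 1) :=
  fun t ht ↦ (hc t ht).continuousWithinAt

theorem IsRadialSolution.hasDerivWithinAt_radialVariation (hc : F.IsRadialSolution x₀ h c)
    {t : ℝ} (ht : t ∈ Icc (0 : ℝ) 1) (hF : DifferentiableAt ℝ F (x₀ + t • h, c t)) (k : E) :
    HasDerivWithinAt (F.radialVariation x₀ h k c)
      (F (x₀ + t • h, c t) h + (F (x₀ + t • h, c t) k + t • fderiv ℝ F (x₀ + t • h, c t)
        (F.horizontalLift (x₀ + t • h, c t) h) k)) (Icc 0 1) t := by
  have segment_deriv : HasDerivWithinAt (fun s : ℝ ↦ x₀ + s • h) h (Icc 0 1) t := by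
    simpa using ((hasDerivWithinAt_id t (Icc (0 : ℝ) 1)).smul_const h).const_add x₀
  have jet_deriv : HasDerivWithinAt (fun s : ℝ ↦ F (x₀ + s • h, c s) k)
      (fderiv ℝ F (x₀ + t • h, c t) (F.horizontalLift (x₀ + t • h, c t) h) k) (Icc 0 1) t := by
    simpa using (hF.hasFDerivAt.comp_hasDerivWithinAt (f := fun s : ℝ ↦ (x₀ + s • h, c s)) t
      (segment_deriv.prodMk (hc t ht))).clm_apply (hasDerivWithinAt_const t _ k)
  refine ((hc t ht).add ((hasDerivWithinAt_id t _).smul jet_deriv)).congr_deriv ?_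
  simp [add_comm]

-- Flatness exchanges `h` and `k` in the second-order term, so that it cancels against the Taylor
-- expansion of `F` at `p`; only a remainder and a term quadratic in `k` are left.
theorem radialDefect_eq {p : E × G} (hflat : F.curvature p = 0) (t : ℝ) (h k : E) :
    F.radialDefect p t h k =
      -(F (p + t • F.horizontalLift p k) - F p - fderiv ℝ F p (t • F.horizontalLift p k)) (h + k)
        - t • fderiv ℝ F p (F.horizontalLift p k) k := by
  rw [radialDefect, fderiv_horizontalLift_comm_of_curvature_eq_zero hflat h k]
  simp only [map_add, map_smul, _root_.sub_apply, _root_.smul_apply]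
  abel

theorem norm_smul_horizontalLift_le {p : E × G} {C : ℝ} (hlift : ‖F.horizontalLift p‖ ≤ C)
    {t : ℝ} (ht : t ∈ Icc (0 : ℝ) 1) (k : E) : ‖t • F.horizontalLift p k‖ ≤ C * ‖k‖ := by
  rw [norm_smul, Real.norm_of_nonneg ht.1]
  exact (mul_le_of_le_one_left (norm_nonneg _) ht.2).trans
    ((F.horizontalLift p).le_of_opNorm_le hlift k)

theorem norm_radialDefect_le {p : E × G} (hflat : F.curvature p = 0) {C ε : ℝ} (hε : 0 ≤ ε)
    (hlift : ‖F.horizontalLift p‖ ≤ C) (hfderiv : ‖fderiv ℝ F p‖ ≤ C)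
    {t : ℝ} (ht : t ∈ Icc (0 : ℝ) 1) (h k : E)
    (htaylor : ‖F (p + t • F.horizontalLift p k) - F p - fderiv ℝ F p (t • F.horizontalLift p k)‖
      ≤ ε * ‖t • F.horizontalLift p k‖) :
    ‖F.radialDefect p t h k‖ ≤ (ε * C * ‖h + k‖ + C * C * ‖k‖) * ‖k‖ := by
  have lift_le : ‖t • F.horizontalLift p k‖ ≤ C * ‖k‖ := norm_smul_horizontalLift_le hlift ht k
  have remainder_le : ‖(F (p + t • F.horizontalLift p k) - F p -
      fderiv ℝ F p (t • F.horizontalLift p k)) (h + k)‖ ≤ ε * (C * ‖k‖) * ‖h + k‖ :=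
    ContinuousLinearMap.le_of_opNorm_le _ (htaylor.trans (by gcongr)) _
  have quadratic_le : ‖t • fderiv ℝ F p (F.horizontalLift p k) k‖ ≤ C * (C * ‖k‖) * ‖k‖ := by
    have hC : 0 ≤ C := (norm_nonneg (fderiv ℝ F p)).trans hfderiv
    calc ‖t • fderiv ℝ F p (F.horizontalLift p k) k‖
        = ‖fderiv ℝ F p (t • F.horizontalLift p k) k‖ := by rw [map_smul, _root_.smul_apply]
      _ ≤ ‖fderiv ℝ F p‖ * ‖t • F.horizontalLift p k‖ * ‖k‖ := (fderiv ℝ F p).le_opNorm₂ _ _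
      _ ≤ C * (C * ‖k‖) * ‖k‖ := by gcongr
  rw [radialDefect_eq hflat]
  calc _ ≤ _ := norm_sub_le _ _
    _ ≤ ε * (C * ‖k‖) * ‖h + k‖ + C * (C * ‖k‖) * ‖k‖ := by
        rw [norm_neg]; exact add_le_add remainder_le quadratic_le
    _ = (ε * C * ‖h + k‖ + C * C * ‖k‖) * ‖k‖ := by ring

theorem exists_norm_horizontalLift_le_norm_fderiv_le (hΩ : IsOpen Ω) (hF : ContDiffOn ℝ 1 F Ω)
    {K : Set (E × G)} (hK : IsCompact K) (hKΩ : K ⊆ Ω) :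
    ∃ C > 0, ∀ p ∈ K, ‖F.horizontalLift p‖ ≤ C ∧ ‖fderiv ℝ F p‖ ≤ C := by
  have lift_cont : ContinuousOn F.horizontalLift Ω :=
    (ContinuousLinearMap.prodₗᵢ ℝ).continuous.comp_continuousOn
      (continuousOn_const.prodMk hF.continuousOn)
  obtain ⟨C, hC, norm_le⟩ := (hK.image_of_continuousOn ((lift_cont.prodMk
    (hF.continuousOn_fderiv_of_isOpen hΩ le_rfl)).mono hKΩ)).isBounded.exists_pos_norm_le
  exact ⟨C, hC, fun p hp ↦ norm_prod_le_iff.1 (norm_le _ (mem_image_of_mem _ hp))⟩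

theorem eventually_norm_radialDefect_le (hΩ : IsOpen Ω) (hF : ContDiffOn ℝ 1 F Ω)
    (hflat : ∀ p ∈ Ω, F.curvature p = 0) {K : Set (E × G)} (hK : IsCompact K) (hKΩ : K ⊆ Ω)
    (h : E) {ε : ℝ} (hε : 0 < ε) :
    ∀ᶠ k in 𝓝 0, ∀ p ∈ K, ∀ t ∈ Icc (0 : ℝ) 1, ‖F.radialDefect p t h k‖ ≤ ε * ‖k‖ := by
  obtain ⟨C, hC, hbound⟩ := exists_norm_horizontalLift_le_norm_fderiv_le hΩ hF hK hKΩ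
  obtain ⟨η, hη, hηε⟩ : ∃ η > 0, C * ‖h‖ * η < ε := exists_pos_mul_lt hε _
  obtain ⟨δ, hδ, taylor⟩ := Metric.eventually_nhds_iff_ball.1 <|
    eventually_forall_mem_norm_sub_sub_fderiv_le hΩ hF hK hKΩ hη
  rw [mul_comm, ← mul_assoc] at hηε
  have coeff_lt : ∀ᶠ k in 𝓝 (0 : E), η * C * ‖h + k‖ + C * C * ‖k‖ < ε :=
    (Continuous.tendsto (by fun_prop) 0).eventually_lt_const (by simpa using hηε)
  filter_upwards [coeff_lt, ball_mem_nhds 0 (div_pos hδ hC)] with k hkε hkδ p hp t ht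
  have lift_mem : t • F.horizontalLift p k ∈ ball 0 δ := by
    rw [mem_ball_zero_iff, lt_div_iff₀' hC] at hkδ
    exact mem_ball_zero_iff.2
      ((norm_smul_horizontalLift_le (hbound p hp).1 ht k).trans_lt hkδ)
  exact (norm_radialDefect_le (hflat p (hKΩ hp)) hη.le (hbound p hp).1 (hbound p hp).2 ht h k
    (taylor _ lift_mem p hp)).trans (by gcongr)

theorem IsRadialSolution.norm_sub_radialVariation_le (hc : F.IsRadialSolution x₀ h c)
    (hd : F.IsRadialSolution x₀ (h + k) d) (hcd : c 0 = d 0)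
    (hF : ∀ t ∈ Icc (0 : ℝ) 1, DifferentiableAt ℝ F (x₀ + t • h, c t))
    {L : ℝ≥0} {s : Set G}
    (hlip : ∀ t ∈ Icc (0 : ℝ) 1, LipschitzOnWith L (fun y ↦ F (x₀ + t • (h + k), y) (h + k)) s)
    (hcs : ∀ t ∈ Icc (0 : ℝ) 1, F.radialVariation x₀ h k c t ∈ s)
    (hds : ∀ t ∈ Icc (0 : ℝ) 1, d t ∈ s) {η : ℝ}
    (hdefect : ∀ t ∈ Icc (0 : ℝ) 1, ‖F.radialDefect (x₀ + t • h, c t) t h k‖ ≤ η) :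
    ‖d 1 - c 1 - F (x₀ + h, c 1) k‖ ≤ gronwallBound 0 L η 1 := by
  have variation_deriv := fun t ht ↦ hc.hasDerivWithinAt_radialVariation ht (hF t ht) k
  have right_deriv {γ : ℝ → G} {γ' : G} {t : ℝ} (ht : t ∈ Ico (0 : ℝ) 1)
      (hγ : HasDerivWithinAt γ γ' (Icc 0 1) t) : HasDerivWithinAt γ γ' (Ici t) t :=
    hγ.mono_of_mem_nhdsWithin (Icc_mem_nhdsGE_of_mem ht)
  have endpoint_dist := dist_le_of_approx_trajectories_ODE_of_mem (εf := η) (εg := 0) (δ := 0)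
    (v := fun t y ↦ F (x₀ + t • (h + k), y) (h + k)) (s := fun _ ↦ s)
    (fun t ht ↦ hlip t (Ico_subset_Icc_self ht))
    (fun t ht ↦ (variation_deriv t ht).continuousWithinAt)
    (fun t ht ↦ right_deriv ht (variation_deriv t (Ico_subset_Icc_self ht)))
    (fun t ht ↦ ?_)
    (fun t ht ↦ hcs t (Ico_subset_Icc_self ht))
    hd.continuousOn
    (fun t ht ↦ right_deriv ht (hd t (Ico_subset_Icc_self ht)))
    (fun t _ ↦ (dist_self _).le)
    (fun t ht ↦ hds t (Ico_subset_Icc_self ht))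
    (by simp [radialVariation, hcd]) 1 (right_mem_Icc.2 zero_le_one)
  · simpa [radialVariation, dist_eq_norm', sub_sub] using endpoint_dist
  · have hq : (x₀ + t • (h + k), F.radialVariation x₀ h k c t) =
        (x₀ + t • h, c t) + t • F.horizontalLift (x₀ + t • h, c t) k := by
      simp [radialVariation, add_assoc]
    rw [dist_eq_norm, hq]
    exact hdefect t (Ico_subset_Icc_self ht)

theorem radialVariation_mem_closedBall {a b M : ℝ} {t : ℝ} (ht : t ∈ Icc (0 : ℝ) 1)
    (hc : c t ∈ closedBall y₀ b) (hF : ‖F (x₀ + t • h, c t)‖ ≤ M) (hk : b + M * ‖k‖ ≤ a) :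
    F.radialVariation x₀ h k c t ∈ closedBall y₀ a := by
  have correction_le : ‖t • F (x₀ + t • h, c t) k‖ ≤ M * ‖k‖ := by
    rw [norm_smul, Real.norm_of_nonneg ht.1]
    exact (mul_le_of_le_one_left (norm_nonneg _) ht.2).trans ((F _).le_of_opNorm_le hF k)
  rw [mem_closedBall_iff_norm] at hc ⊢
  calc ‖F.radialVariation x₀ h k c t - y₀‖ = ‖(c t - y₀) + t • F (x₀ + t • h, c t) k‖ := by
        rw [radialVariation, add_sub_right_comm]
    _ ≤ b + M * ‖k‖ := norm_add_le_of_le hc correction_le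
    _ ≤ a := hk

theorem hasFDerivAt_radialSolution_endpoint (hΩ : IsOpen Ω) (hF : ContDiffOn ℝ 1 F Ω)
    (hflat : ∀ p ∈ Ω, F.curvature p = 0) {a : ℝ} {r M : ℝ≥0} (hboxΩ : closedBall (x₀, y₀) a ⊆ Ω)
    (hlip : LipschitzOnWith M F (closedBall (x₀, y₀) a))
    (hbound : ∀ p ∈ closedBall (x₀, y₀) a, ‖F p‖ ≤ M) (hra : r ≤ a) (hMr : M * r < a)
    {c : E → ℝ → G} (hc : ∀ h ∈ ball (0 : E) r, c h 0 = y₀ ∧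
      (∀ t, c h t ∈ closedBall y₀ (M * ‖h‖)) ∧ F.IsRadialSolution x₀ h (c h))
    (hh : h ∈ ball (0 : E) r) :
    HasFDerivAt (fun h ↦ c h 1) (F (x₀ + h, c h 1)) h := by
  have norm_le {h : E} (hh : h ∈ ball (0 : E) r) : ‖h‖ ≤ r := (mem_ball_zero_iff.1 hh).le
  have mul_norm_le {h : E} (hh : h ∈ ball (0 : E) r) : M * ‖h‖ ≤ M * r :=
    mul_le_mul_of_nonneg_left (norm_le hh) M.2
  have solution_mem {h : E} (hh : h ∈ ball (0 : E) r) (t : ℝ) : c h t ∈ closedBall y₀ a :=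
    closedBall_subset_closedBall ((mul_norm_le hh).trans hMr.le) ((hc h hh).2.1 t)
  have graph_mem : ∀ t ∈ Icc (0 : ℝ) 1, (x₀ + t • h, c h t) ∈ closedBall (x₀, y₀) a :=
    fun t ht ↦ mk_add_smul_mem_closedBall ((norm_le hh).trans hra) ht (solution_mem hh t)
  have graph_compact : IsCompact ((fun t : ℝ ↦ (x₀ + t • h, c h t)) '' Icc 0 1) :=
    isCompact_Icc.image_of_continuousOn <|
      ContinuousOn.prodMk (by fun_prop) (hc h hh).2.2.continuousOn
  rw [hasFDerivAt_iff_isLittleO_nhds_zero, Asymptotics.isLittleO_iff]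
  intro ε hε
  obtain ⟨η, hη, hηε⟩ := exists_pos_mul_lt hε (gronwallBound 0 ↑(M * r) 1 1)
  have defect_le := eventually_norm_radialDefect_le hΩ hF hflat graph_compact
    (image_subset_iff.2 fun t ht ↦ hboxΩ (graph_mem t ht)) h hη
  have add_mem : ∀ᶠ k in 𝓝 0, h + k ∈ ball (0 : E) r :=
    (Continuous.tendsto (by fun_prop) 0).eventually_mem (isOpen_ball.mem_nhds (by simpa using hh))
  have radius_lt : ∀ᶠ k in 𝓝 (0 : E), M * ‖h‖ + M * ‖k‖ < a :=
    (Continuous.tendsto (by fun_prop) 0).eventually_lt_const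
      (by simpa using (mul_norm_le hh).trans_lt hMr)
  filter_upwards [defect_le, add_mem, radius_lt] with k hdefect hhk hka
  have hlip_hk : ∀ t ∈ Icc (0 : ℝ) 1, LipschitzOnWith (M * r)
      (fun y ↦ F (x₀ + t • (h + k), y) (h + k)) (closedBall y₀ a) := fun t ht ↦
    (lipschitzOnWith_radial hlip
      (add_smul_mem_closedBall ((norm_le hhk).trans hra) ht) (h + k)).weaken (mul_norm_le hhk)
  calc ‖c (h + k) 1 - c h 1 - F (x₀ + h, c h 1) k‖
      ≤ gronwallBound 0 ↑(M * r) (η * ‖k‖) 1 :=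
        (hc h hh).2.2.norm_sub_radialVariation_le (hc _ hhk).2.2
          ((hc h hh).1.trans (hc _ hhk).1.symm)
          (fun t ht ↦ (hF.differentiableOn one_ne_zero).differentiableAt
            (hΩ.mem_nhds (hboxΩ (graph_mem t ht))))
          hlip_hk
          (fun t ht ↦ radialVariation_mem_closedBall ht ((hc h hh).2.1 t)
            (hbound _ (graph_mem t ht)) hka.le)
          (fun t _ ↦ solution_mem hhk t)
          (fun t ht ↦ hdefect _ (mem_image_of_mem _ ht) t ht)
    _ = gronwallBound 0 ↑(M * r) 1 1 * η * ‖k‖ := by rw [gronwallBound_zero_eq_mul, mul_assoc]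
    _ ≤ ε * ‖k‖ := by gcongr

theorem exists_isIntegralSectionOn [CompleteSpace G] (hΩ : IsOpen Ω) (hF : ContDiffOn ℝ 1 F Ω)
    (hflat : ∀ p ∈ Ω, F.curvature p = 0) (hp : (x₀, y₀) ∈ Ω) :
    ∃ U : Set E, IsOpen U ∧ x₀ ∈ U ∧ ∃ f : E → G, f x₀ = y₀ ∧
      (∀ x ∈ U, (x, f x) ∈ Ω) ∧ F.IsIntegralSectionOn f U := by
  obtain ⟨a, ha, M, hboxΩ, hlip, hbound⟩ :=
    exists_closedBall_subset_lipschitzOnWith_norm_le hΩ hF hp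
  obtain ⟨r, hr, hra⟩ : ∃ r > 0, ((M : ℝ) + 1) * r < a := exists_pos_mul_lt ha _
  lift r to ℝ≥0 using hr.le
  have hra' : r ≤ a := by nlinarith [M.2, r.2]
  have hMr : M * r < a := by nlinarith [M.2, r.2]
  choose! c hc using fun (h : E) (hh : h ∈ ball (0 : E) r) ↦
    have hhr : ‖h‖ ≤ r := (mem_ball_zero_iff.1 hh).le
    exists_isRadialSolution hlip hbound (hhr.trans hra')
      ((mul_le_mul_of_nonneg_left hhr M.2).trans hMr.le)
  have sub_mem {x : E} (hx : x ∈ ball x₀ r) : x - x₀ ∈ ball (0 : E) r := by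
    simpa [dist_eq_norm] using hx
  refine ⟨ball x₀ r, isOpen_ball, mem_ball_self hr, fun x ↦ c (x - x₀) 1, ?_, fun x hx ↦ ?_,
    fun x hx ↦ ?_⟩
  · simpa using (hc 0 (mem_ball_self hr)).2.1 1
  · have hxr : ‖x - x₀‖ ≤ r := (mem_ball_iff_norm.1 hx).le
    have c_mem : c (x - x₀) 1 ∈ closedBall y₀ a := closedBall_subset_closedBall
      ((mul_le_mul_of_nonneg_left hxr M.2).trans hMr.le) ((hc _ (sub_mem hx)).2.1 1)
    exact hboxΩ (closedBall_prod_same x₀ y₀ a ▸ ⟨ball_subset_closedBall.trans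
      (closedBall_subset_closedBall hra') hx, c_mem⟩)
  · have endpoint_deriv := hasFDerivAt_radialSolution_endpoint hΩ hF hflat hboxΩ hlip hbound hra'
      hMr hc (sub_mem hx)
    rw [add_sub_cancel] at endpoint_deriv
    exact (hasFDerivAt_comp_sub x₀).2 endpoint_deriv

theorem IsIntegralSectionOn.contDiffOn {f : E → G} {U : Set E} (hU : IsOpen U) {r : ℕ∞}
    (hF : ContDiffOn ℝ r F Ω) (hf : F.IsIntegralSectionOn f U) (hfΩ : ∀ x ∈ U, (x, f x) ∈ Ω) :
    ContDiffOn ℝ (r + 1) f U := by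
  have bootstrap {s : ℕ∞} (hs : s ≤ r) (hfs : ContDiffOn ℝ s f U) :
      ContDiffOn ℝ (s + 1) f U := by
    rw [contDiffOn_succ_iff_fderiv_of_isOpen hU]
    refine ⟨fun x hx ↦ (hf x hx).differentiableAt.differentiableWithinAt, by simp, ?_⟩
    exact ((hF.of_le (mod_cast hs)).comp (contDiffOn_id.prodMk hfs) hfΩ).congr
      fun x hx ↦ (hf x hx).fderiv
  refine bootstrap le_rfl (contDiffOn_iff_forall_nat_le.2 fun n hn ↦ ?_)
  induction n with
  | zero => exact contDiffOn_zero.2 fun x hx ↦ (hf x hx).continuousAt.continuousWithinAt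
  | succ n ih =>
    have hnr : (n : ℕ∞) ≤ r := le_trans (mod_cast n.le_succ) hn
    exact bootstrap hnr (ih hnr)

end Frobenius

section Coordinates

variable {ι κ : Type*} [Fintype ι] [Fintype κ] {Γ : ι → κ → (ι → ℝ) × (κ → ℝ) → ℝ}

/-- The jet field with coefficients `Γ^i_μ`, written `Γ μ i`: it maps `u` to the vector with
components `∑ μ, Γ^i_μ u^μ`. -/
noncomputable def ofCoeffs (Γ : ι → κ → (ι → ℝ) × (κ → ℝ) → ℝ) : JetField (ι → ℝ) (κ → ℝ) :=
  fun p ↦ ContinuousLinearMap.pi fun i ↦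
    ∑ μ, Γ μ i p • ContinuousLinearMap.proj (R := ℝ) (φ := fun _ : ι ↦ ℝ) μ

/-- The component `R^j_{μν}` of the curvature of the connection with coefficients `Γ^i_μ`. -/
noncomputable def curvatureCoeff [DecidableEq ι] [DecidableEq κ]
    (Γ : ι → κ → (ι → ℝ) × (κ → ℝ) → ℝ) (p : (ι → ℝ) × (κ → ℝ)) (μ ν : ι) (j : κ) : ℝ :=
  fderiv ℝ (Γ ν j) p (Pi.single μ 1, 0) - fderiv ℝ (Γ μ j) p (Pi.single ν 1, 0)
    + ∑ i, (Γ μ i p * fderiv ℝ (Γ ν j) p (0, Pi.single i 1)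
      - Γ ν i p * fderiv ℝ (Γ μ j) p (0, Pi.single i 1))

theorem ofCoeffs_single [DecidableEq ι] (p : (ι → ℝ) × (κ → ℝ)) (μ : ι) (i : κ) :
    ofCoeffs Γ p (Pi.single μ 1) i = Γ μ i p := by
  simp [ofCoeffs, Pi.single_apply]

theorem contDiffOn_ofCoeffs {r : WithTop ℕ∞} {Ω : Set ((ι → ℝ) × (κ → ℝ))}
    (hΓ : ∀ μ i, ContDiffOn ℝ r (Γ μ i) Ω) : ContDiffOn ℝ r (ofCoeffs Γ) Ω := by
  refine contDiffOn_clm_apply.2 fun u ↦ contDiffOn_pi.2 fun i ↦ ?_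
  simp only [ofCoeffs, ContinuousLinearMap.pi_apply, _root_.sum_apply, _root_.smul_apply,
    ContinuousLinearMap.proj_apply]
  exact ContDiffOn.sum fun μ _ ↦ (hΓ μ i).smul contDiffOn_const

theorem fderiv_ofCoeffs_single [DecidableEq ι] {p : (ι → ℝ) × (κ → ℝ)}
    (hΓ : DifferentiableAt ℝ (ofCoeffs Γ) p) (w : (ι → ℝ) × (κ → ℝ)) (μ : ι) (j : κ) :
    fderiv ℝ (ofCoeffs Γ) p w (Pi.single μ 1) j = fderiv ℝ (Γ μ j) p w := by
  have h := hasFDerivAt_pi'.1 (hΓ.hasFDerivAt.clm_apply (hasFDerivAt_const (Pi.single μ 1) p)) j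
  simp only [ofCoeffs_single] at h
  simp [h.fderiv]

theorem curvature_ofCoeffs_single [DecidableEq ι] [DecidableEq κ] {p : (ι → ℝ) × (κ → ℝ)}
    (hΓ : DifferentiableAt ℝ (ofCoeffs Γ) p) (μ ν : ι) (j : κ) :
    (ofCoeffs Γ).curvature p (Pi.single μ 1) (Pi.single ν 1) j = curvatureCoeff Γ p μ ν j := by
  simp only [curvature, curvatureCoeff, _root_.sub_apply, ContinuousLinearMap.flip_apply,
    ContinuousLinearMap.comp_apply, horizontalLift_apply, Pi.sub_apply,
    fderiv_ofCoeffs_single hΓ]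
  simp only [clm_apply_mk_eq_add_sum _ _ (ofCoeffs Γ p _), ofCoeffs_single, smul_eq_mul,
    Finset.sum_sub_distrib]
  abel

theorem curvature_ofCoeffs_eq_zero [DecidableEq ι] [DecidableEq κ] {p : (ι → ℝ) × (κ → ℝ)}
    (hΓ : DifferentiableAt ℝ (ofCoeffs Γ) p) (hflat : ∀ μ ν j, curvatureCoeff Γ p μ ν j = 0) :
    (ofCoeffs Γ).curvature p = 0 := by
  refine ContinuousLinearMap.coe_injective <| (Pi.basisFun ℝ ι).ext fun μ ↦
    ContinuousLinearMap.coe_injective <| (Pi.basisFun ℝ ι).ext fun ν ↦ funext fun j ↦ ?_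
  simpa [curvature_ofCoeffs_single hΓ] using hflat μ ν j

end Coordinates

end JetField

theorem stmt_7_general {ι κ : Type*} [Fintype ι] [DecidableEq ι] [Fintype κ] [DecidableEq κ]
    {r : ℕ∞} (hr : 1 ≤ r) (Γ : ι → κ → (ι → ℝ) × (κ → ℝ) → ℝ) {Ω : Set ((ι → ℝ) × (κ → ℝ))}
    (hΩ : IsOpen Ω) (hΓ : ∀ μ i, ContDiffOn ℝ r (Γ μ i) Ω)
    (hflat : ∀ p ∈ Ω, ∀ μ ν j, JetField.curvatureCoeff Γ p μ ν j = 0)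
    {x₀ : ι → ℝ} {y₀ : κ → ℝ} (hp : (x₀, y₀) ∈ Ω) :
    ∃ U : Set (ι → ℝ), IsOpen U ∧ x₀ ∈ U ∧
      ∃ f : (ι → ℝ) → (κ → ℝ), ContDiffOn ℝ (r + 1) f U ∧ f x₀ = y₀ ∧ (∀ x ∈ U, (x, f x) ∈ Ω) ∧
        ∀ x ∈ U, ∀ μ i, fderiv ℝ f x (Pi.single μ 1) i = Γ μ i (x, f x) := by
  have hF : ContDiffOn ℝ r (JetField.ofCoeffs Γ) Ω := JetField.contDiffOn_ofCoeffs hΓ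
  have hF_one : ContDiffOn ℝ 1 (JetField.ofCoeffs Γ) Ω := hF.of_le (mod_cast hr)
  have curvature_zero : ∀ p ∈ Ω, (JetField.ofCoeffs Γ).curvature p = 0 := fun p hp ↦
    JetField.curvature_ofCoeffs_eq_zero
      ((hF_one.differentiableOn one_ne_zero).differentiableAt (hΩ.mem_nhds hp)) (hflat p hp)
  obtain ⟨U, hU, hx₀, f, hf₀, hfΩ, hf⟩ :=
    JetField.exists_isIntegralSectionOn hΩ hF_one curvature_zero hp
  refine ⟨U, hU, hx₀, f, hf.contDiffOn hU hF hfΩ, hf₀, hfΩ, fun x hx μ i ↦ ?_⟩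
  rw [(hf x hx).fderiv, JetField.ofCoeffs_single]

/-- Sufficiency direction of the integrability Proposition: if the curvature of
the connection with coefficients `Γ^i_μ` vanishes identically, then through every
point `(x₀, y₀)` there is a local solution of the PDE system
`∂f^i/∂x^μ = Γ^i_μ(x, f(x))`. -/
theorem stmt_7 {m n : ℕ}
    (Γ : Fin m → Fin n → ((Fin m → ℝ) × (Fin n → ℝ)) → ℝ)
    (hΓ : ∀ μ i, ContDiff ℝ (⊤ : ℕ∞) (Γ μ i))
    (hflat : ∀ (p : (Fin m → ℝ) × (Fin n → ℝ)) (μ ν : Fin m) (j : Fin n),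
      fderiv ℝ (Γ ν j) p (Pi.single μ 1, 0)
        - fderiv ℝ (Γ μ j) p (Pi.single ν 1, 0)
        + ∑ i : Fin n,
            (Γ μ i p * fderiv ℝ (Γ ν j) p (0, Pi.single i 1)
              - Γ ν i p * fderiv ℝ (Γ μ j) p (0, Pi.single i 1))
      = 0) :
    ∀ (x₀ : Fin m → ℝ) (y₀ : Fin n → ℝ),
      ∃ U : Set (Fin m → ℝ), IsOpen U ∧ x₀ ∈ U ∧
        ∃ f : (Fin m → ℝ) → (Fin n → ℝ), ContDiffOn ℝ (⊤ : ℕ∞) f U ∧ f x₀ = y₀ ∧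
          ∀ x ∈ U, ∀ (μ : Fin m) (i : Fin n),
            fderiv ℝ f x (Pi.single μ 1) i = Γ μ i (x, f x) := by
  intro x₀ y₀
  obtain ⟨U, hU, hx₀, f, hf, hf₀, -, hsol⟩ := stmt_7_general le_top Γ isOpen_univ
    (fun μ i ↦ (hΓ μ i).contDiffOn) (fun p _ ↦ hflat p) (mem_univ (x₀, y₀))
  exact ⟨U, hU, hx₀, f, hf, hf₀, hsol⟩
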